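/- Let n ≥ 1, 1 ≤ q ≤ n, and let H be an n×n Hermitian matrix whose eigenvalues μ₁,…,μₙ (with multiplicity) satisfy Σ_{i∈S} μᵢ ≥ 0 for every q-element subset S ⊆ {1,…,n}. Then for every j with q ≤ j ≤ n and every (0,j)-coefficient system u on ℂⁿ, H(u,u) ≥ 0. -/

import Mathlib

open scoped BigOperators
open MeasureTheory

namespace HM

/-- The finset of strictly increasing multi-indices of length `q` with entries in `Fin n`. -/
def Incr (n q : ℕ) : Finset (Fin q → Fin n) :=
  Finset.univ.filter (fun I => ∀ a b : Fin q, a < b → I a < I b)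

/-- Prepend the index `k` to a `(q-1)`-tuple `J`, giving the `q`-tuple `kJ`. -/
def cons' {n : ℕ} (q : ℕ) (k : Fin n) (J : Fin (q - 1) → Fin n) : Fin q → Fin n :=
  fun i => if h : (i : ℕ) = 0 then k else J ⟨(i : ℕ) - 1, by have := i.isLt; omega⟩

/-- A (0,q)-coefficient system: an antisymmetric assignment of complex numbers to q-tuples
(hence vanishing on tuples with a repeated index). -/
def IsCoeff {n q : ℕ} (u : (Fin q → Fin n) → ℂ) : Prop :=
  ∀ (σ : Equiv.Perm (Fin q)) (I : Fin q → Fin n),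
    u (I ∘ σ) = ((Equiv.Perm.sign σ : ℤ) : ℂ) * u I

/-- `|u|²`, the sum of `|u_I|²` over strictly increasing multi-indices `I`. -/
noncomputable def nSq {n q : ℕ} (u : (Fin q → Fin n) → ℂ) : ℝ :=
  ∑ I ∈ Incr n q, ‖u I‖ ^ 2

/-- The Hessian form of a matrix `H` on coefficient systems:
`H(u,v) = Σ'_{|J|=q-1} Σ_{k,l} H_{lk} u_{lJ} conj(v_{kJ})`. -/
noncomputable def mForm {n : ℕ} (q : ℕ) (H : Matrix (Fin n) (Fin n) ℂ)
    (u v : (Fin q → Fin n) → ℂ) : ℂ :=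
  ∑ J ∈ Incr n (q - 1), ∑ k : Fin n, ∑ l : Fin n,
    H l k * u (cons' q l J) * star (v (cons' q k J))

/-- `σ^I_J`: the sign of the permutation rearranging `I` into `J`; `0` if `J` is not a
rearrangement of `I` (in particular `0` if `I` has a repeated entry). -/
def permSign {n p : ℕ} (I J : Fin p → Fin n) : ℤ :=
  if Function.Injective I then
    ∑ π : Equiv.Perm (Fin p), if J = I ∘ π then ((Equiv.Perm.sign π : ℤ)) else 0
  else 0

/-- The Wirtinger derivative `∂f/∂z_k` of a complex-valued function, via real Fréchet
derivatives: `½(∂f/∂x_k − i ∂f/∂y_k)`. -/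
noncomputable def dz {n : ℕ} (f : (Fin n → ℂ) → ℂ) (k : Fin n) (z : Fin n → ℂ) : ℂ :=
  (1/2 : ℂ) * (fderiv ℝ f z (Pi.single k 1) - Complex.I * fderiv ℝ f z (Pi.single k Complex.I))

/-- The Wirtinger derivative `∂f/∂z̄_k`: `½(∂f/∂x_k + i ∂f/∂y_k)`. -/
noncomputable def dzbar {n : ℕ} (f : (Fin n → ℂ) → ℂ) (k : Fin n) (z : Fin n → ℂ) : ℂ :=
  (1/2 : ℂ) * (fderiv ℝ f z (Pi.single k 1) + Complex.I * fderiv ℝ f z (Pi.single k Complex.I))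

/-- The mixed Wirtinger Hessian `∂²f/∂z_l∂z̄_k` of a real-valued function. -/
noncomputable def hessW {n : ℕ} (f : (Fin n → ℂ) → ℝ) (l k : Fin n) (z : Fin n → ℂ) : ℂ :=
  dz (fun w => dzbar (fun y => (f y : ℂ)) k w) l z

/-- The Hessian form `i∂∂̄f(u,u)(z) = Σ'_{|J|=q-1} Σ_{k,l} ∂²f/∂z_l∂z̄_k(z) u_{lJ} conj(u_{kJ})`. -/
noncomputable def hForm {n : ℕ} (q : ℕ) (f : (Fin n → ℂ) → ℝ)
    (u : (Fin q → Fin n) → ℂ) (z : Fin n → ℂ) : ℂ :=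
  ∑ J ∈ Incr n (q - 1), ∑ k : Fin n, ∑ l : Fin n,
    hessW f l k z * u (cons' q l J) * star (u (cons' q k J))

/-- Coefficient of `∂̄u` on the `(q+1)`-tuple `M`:
`(∂̄u)_M = Σ_k Σ'_{|J|=q} σ^{kJ}_M ∂u_J/∂z̄_k`. -/
noncomputable def dbarC {n : ℕ} (q : ℕ) (u : (Fin q → Fin n) → (Fin n → ℂ) → ℂ)
    (M : Fin (q + 1) → Fin n) (z : Fin n → ℂ) : ℂ :=
  ∑ k : Fin n, ∑ J ∈ Incr n q, ((permSign (cons' (q + 1) k J) M : ℤ) : ℂ) * dzbar (u J) k z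

/-- Coefficient of `ϑu` on the `(q-1)`-tuple `J`: `(ϑu)_J = −Σ_l ∂u_{lJ}/∂z_l`. -/
noncomputable def thetaC {n : ℕ} (q : ℕ) (u : (Fin q → Fin n) → (Fin n → ℂ) → ℂ)
    (J : Fin (q - 1) → Fin n) (z : Fin n → ℂ) : ℂ :=
  -∑ l : Fin n, dz (u (cons' q l J)) l z

/-- Pointwise `|∂̄u|²`. -/
noncomputable def dbarSq {n : ℕ} (q : ℕ) (u : (Fin q → Fin n) → (Fin n → ℂ) → ℂ)
    (z : Fin n → ℂ) : ℝ :=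
  ∑ M ∈ Incr n (q + 1), ‖dbarC q u M z‖ ^ 2

/-- Pointwise `|ϑu|²`. -/
noncomputable def thetaSq {n : ℕ} (q : ℕ) (u : (Fin q → Fin n) → (Fin n → ℂ) → ℂ)
    (z : Fin n → ℂ) : ℝ :=
  ∑ J ∈ Incr n (q - 1), ‖thetaC q u J z‖ ^ 2

/-- Remove the `i`-th entry of a `j`-tuple, giving a `(j-1)`-tuple. -/
def removeIdx {n j : ℕ} (I : Fin j → Fin n) (i : Fin j) : Fin (j - 1) → Fin n :=
  fun t => if (t : ℕ) < (i : ℕ) then I ⟨t, by have := t.isLt; omega⟩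
    else I ⟨(t : ℕ) + 1, by have := t.isLt; omega⟩

/-- The increasing `j`-tuple listing a finset `S` (with default `d` out of range). -/
def sortedTuple {n : ℕ} (j : ℕ) (S : Finset (Fin n)) (d : Fin n) : Fin j → Fin n :=
  fun t => (S.sort (· ≤ ·)).getD t d

end HM

/-!
Diagonalise `H` in a unitary eigenbasis with eigenvalues `μ` and let `w` be the coefficients of `u`
in that basis. Then `H(u,u) = Σ'_{|I|=j} (Σ_{i∈I} μ_i) |w_I|²`, and every `j`-element sum of
eigenvalues is nonnegative as soon as every `q`-element one is. To reach the identity, replace the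
sums over increasing multi-indices by sums over all tuples, where every increasing `p`-tuple counts
`p!` times: there the first slot of `u` sees `H` and the others see only Parseval's identity, and
since `|w_I|²` is a symmetric function of `I`, the resulting weight `μ_{i₁}` may be averaged over
all the slots.
-/

namespace HM

lemma sum_nonneg_of_le_card {ι M : Type*} [AddCommMonoid M] [LinearOrder M]
    [IsOrderedCancelAddMonoid M] {μ : ι → M} {q : ℕ} (hq : 1 ≤ q)
    (hμ : ∀ S : Finset ι, S.card = q → 0 ≤ ∑ i ∈ S, μ i) {S : Finset ι} (hS : q ≤ S.card) :
    0 ≤ ∑ i ∈ S, μ i := by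
  classical
  obtain ⟨j, hj⟩ : ∃ j, S.card = j := ⟨_, rfl⟩
  rw [hj] at hS
  induction j, hS using Nat.le_induction generalizing S with
  | base => exact hμ S hj
  | succ j hqj ih =>
    have erase_card {i : ι} (hi : i ∈ S) : (S.erase i).card = j := by
      rw [Finset.card_erase_of_mem hi, hj, Nat.add_sub_cancel]
    by_contra! hneg
    have term_neg (i : ι) (hi : i ∈ S) : μ i < 0 :=
      (le_add_of_nonneg_right (ih (erase_card hi))).trans_lt
        ((Finset.add_sum_erase S μ hi).trans_lt hneg)
    obtain ⟨i, hi⟩ : S.Nonempty := Finset.card_pos.1 (by omega)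
    have erase_nonempty : (S.erase i).Nonempty :=
      Finset.card_pos.1 (by rw [erase_card hi]; omega)
    exact (ih (erase_card hi)).not_gt <|
      Finset.sum_neg (fun k hk => term_neg k (Finset.mem_of_mem_erase hk)) erase_nonempty

section TupleSums

open scoped Nat

lemma strictMono_comp_perm_iff {α : Type*} [LinearOrder α] {m : ℕ} {J : Fin m → α}
    (hJ : Function.Injective J) {σ : Equiv.Perm (Fin m)} :
    StrictMono (J ∘ σ) ↔ σ = Tuple.sort J := by
  constructor
  · intro hσ
    have h := Tuple.unique_monotone hσ.monotone (Tuple.monotone_sort J)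
    exact Equiv.ext fun i => hJ (congrFun h i)
  · rintro rfl
    exact (Tuple.monotone_sort J).strictMono_of_injective (hJ.comp (Equiv.injective _))

variable {ι α M R : Type*} [Fintype ι] [DecidableEq ι] [Fintype α]

lemma sum_comp_perm [AddCommMonoid M] (σ : Equiv.Perm ι) (f : (ι → α) → M) :
    ∑ I, f (I ∘ σ) = ∑ I, f I :=
  Equiv.sum_comp (σ.symm.arrowCongr (Equiv.refl α)) f

lemma card_nsmul_sum_apply_mul [NonUnitalNonAssocSemiring R] (d : α → R) {g : (ι → α) → R}
    (hg : ∀ (σ : Equiv.Perm ι) (I : ι → α), g (I ∘ σ) = g I) (i : ι) :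
    Fintype.card ι • ∑ I, d (I i) * g I = ∑ I, (∑ t, d (I t)) * g I := by
  have slot_indep (t : ι) : ∑ I, d (I t) * g I = ∑ I, d (I i) * g I := by
    rw [← sum_comp_perm (Equiv.swap i t)]
    simp only [Function.comp_apply, Equiv.swap_apply_right, hg]
  simp only [Finset.sum_mul]
  rw [Finset.sum_comm, Finset.sum_congr rfl fun t _ => slot_indep t, Finset.sum_const,
    Finset.card_univ]

lemma sum_tuple_succ [AddCommMonoid M] {m : ℕ} (f : (Fin (m + 1) → α) → M) :
    ∑ I, f I = ∑ x, ∑ J, f (Fin.cons x J) := by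
  rw [← Equiv.sum_comp (Fin.consEquiv fun _ => α) f, Fintype.sum_prod_type]
  rfl

variable {n m : ℕ}

lemma mem_incr {I : Fin m → Fin n} : I ∈ Incr n m ↔ StrictMono I := by
  simp only [Incr, Finset.mem_filter, Finset.mem_univ, true_and]
  rfl

lemma factorial_nsmul_sum_incr [AddCommMonoid M] {f : (Fin m → Fin n) → M}
    (hf : ∀ (σ : Equiv.Perm (Fin m)) (I : Fin m → Fin n), f (I ∘ σ) = f I)
    (hf₀ : ∀ I, ¬ Function.Injective I → f I = 0) :
    m ! • ∑ I ∈ Incr n m, f I = ∑ I, f I := by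
  have sum_incr (σ : Equiv.Perm (Fin m)) :
      ∑ I ∈ Incr n m, f I = ∑ I, if I ∘ σ ∈ Incr n m then f I else 0 := by
    simpa only [hf, Finset.sum_ite_mem, Finset.univ_inter] using
      (sum_comp_perm σ fun I => if I ∈ Incr n m then f I else 0).symm
  have sum_rearrangements (I : Fin m → Fin n) :
      ∑ σ : Equiv.Perm (Fin m), (if I ∘ σ ∈ Incr n m then f I else 0) = f I := by
    by_cases hI : Function.Injective I
    · simp only [mem_incr, strictMono_comp_perm_iff hI, Finset.sum_ite_eq', Finset.mem_univ,
        if_true]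
    · simp only [hf₀ I hI, ite_self, Finset.sum_const_zero]
  calc m ! • ∑ I ∈ Incr n m, f I
      = ∑ _σ : Equiv.Perm (Fin m), ∑ I ∈ Incr n m, f I := by
        rw [Finset.sum_const, Finset.card_univ, Fintype.card_perm, Fintype.card_fin]
    _ = ∑ I, ∑ σ : Equiv.Perm (Fin m), if I ∘ σ ∈ Incr n m then f I else 0 := by
        rw [Finset.sum_congr rfl fun σ _ => sum_incr σ, Finset.sum_comm]
    _ = ∑ I, f I := Finset.sum_congr rfl fun I _ => sum_rearrangements I

end TupleSums

section CoefficientSystems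

open scoped Nat

variable {n q m : ℕ}

lemma IsCoeff.eq_zero_of_not_injective {u : (Fin q → Fin n) → ℂ} (hu : IsCoeff u)
    {I : Fin q → Fin n} (hI : ¬ Function.Injective I) : u I = 0 := by
  obtain ⟨a, b, hab, hne⟩ := Function.not_injective_iff.1 hI
  have swap_invariant : I ∘ Equiv.swap a b = I := by
    rw [Equiv.comp_swap_eq_update, hab, Function.update_eq_self, ← hab, Function.update_eq_self]
  have h := hu (Equiv.swap a b) I
  rw [swap_invariant, Equiv.Perm.sign_swap hne, Units.val_neg, Units.val_one, Int.cast_neg,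
    Int.cast_one, neg_one_mul] at h
  exact self_eq_neg.1 h

lemma IsCoeff.mul_star_comp_perm {u v : (Fin q → Fin n) → ℂ} (hu : IsCoeff u) (hv : IsCoeff v)
    (σ : Equiv.Perm (Fin q)) (I : Fin q → Fin n) :
    u (I ∘ σ) * star (v (I ∘ σ)) = u I * star (v I) := by
  rw [hu, hv]
  rcases Int.units_eq_one_or (Equiv.Perm.sign σ) with hσ | hσ <;> simp [hσ]

lemma IsCoeff.cons {u : (Fin (m + 1) → Fin n) → ℂ} (hu : IsCoeff u) (k : Fin n) :
    IsCoeff fun J : Fin m → Fin n => u (Fin.cons k J) := by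
  intro σ J
  have cons_comp : (Fin.cons k (J ∘ σ) : Fin (m + 1) → Fin n) =
      Fin.cons k J ∘ Equiv.Perm.decomposeFin.symm (0, σ) := by
    funext i
    cases i using Fin.cases <;> simp [Equiv.Perm.decomposeFin_symm_apply_succ]
  simp only [cons_comp, hu _ (Fin.cons k J), Equiv.Perm.decomposeFin.symm_sign, if_true, one_mul]

lemma cons'_succ (k : Fin n) (J : Fin m → Fin n) : cons' (m + 1) k J = Fin.cons k J := by
  funext i
  cases i using Fin.cases <;> simp [cons']

lemma factorial_nsmul_mForm (H : Matrix (Fin n) (Fin n) ℂ) {u v : (Fin (m + 1) → Fin n) → ℂ}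
    (hu : IsCoeff u) (hv : IsCoeff v) :
    m ! • mForm (m + 1) H u v = ∑ J : Fin m → Fin n, ∑ k, ∑ l,
      H l k * (u (Fin.cons l J) * star (v (Fin.cons k J))) := by
  rw [← factorial_nsmul_sum_incr]
  · simp only [mForm, cons'_succ, mul_assoc]
    rfl
  · intro σ J
    simp only [(hu.cons _).mul_star_comp_perm (hv.cons _)]
  · intro J hJ
    simp only [(hu.cons _).eq_zero_of_not_injective hJ, zero_mul, mul_zero, Finset.sum_const_zero]

end CoefficientSystems

section ChangeOfBasis

open scoped Matrix

/-- The coefficients of the covariant tensor `u` in the basis formed by the columns of `U`: every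
slot of `u` is contracted with `U`. -/
def changeBasis {ι κ R : Type*} [Fintype ι] [CommSemiring R] {q : ℕ} (U : Matrix ι κ R)
    (u : (Fin q → ι) → R) (I : Fin q → κ) : R :=
  ∑ K : Fin q → ι, (∏ t, U (K t) (I t)) * u K

lemma IsCoeff.changeBasis {n p q : ℕ} (U : Matrix (Fin n) (Fin p) ℂ) {u : (Fin q → Fin n) → ℂ}
    (hu : IsCoeff u) : IsCoeff (changeBasis U u) := by
  intro σ I
  have prod_comp (K : Fin q → Fin n) :
      ∏ t, U ((K ∘ σ) t) ((I ∘ σ) t) = ∏ t, U (K t) (I t) :=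
    Equiv.prod_comp σ fun t => U (K t) (I t)
  simp only [HM.changeBasis]
  rw [← sum_comp_perm σ, Finset.mul_sum]
  refine Finset.sum_congr rfl fun K _ => ?_
  rw [prod_comp, hu, mul_left_comm]

variable {ι κ R : Type*} [Fintype ι] [CommSemiring R] {m : ℕ}

lemma changeBasis_cons (U : Matrix ι κ R) (u : (Fin (m + 1) → ι) → R) (x : κ) (J : Fin m → κ) :
    changeBasis U u (Fin.cons x J) =
      changeBasis U (fun K => ((fun l => u (Fin.cons l K)) ᵥ* U) x) J := by
  simp only [changeBasis, Matrix.vecMul, dotProduct, sum_tuple_succ, Fin.prod_univ_succ,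
    Fin.cons_zero, Fin.cons_succ, Finset.mul_sum]
  rw [Finset.sum_comm]
  exact Finset.sum_congr rfl fun K _ => Finset.sum_congr rfl fun l _ => by ring

variable [Fintype κ] [StarRing R]

lemma sum_mul_vecMul_mul_star [DecidableEq κ] (U : Matrix ι κ R) (d : κ → R) (a b : ι → R) :
    ∑ x, d x * ((a ᵥ* U) x * star ((b ᵥ* U) x)) =
      ∑ k, ∑ l, (U * Matrix.diagonal d * Uᴴ) l k * (a l * star (b k)) := by
  simp only [Matrix.vecMul, dotProduct, star_sum, star_mul', Finset.mul_sum, Finset.sum_mul,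
    Matrix.mul_apply (N := Uᴴ), Matrix.mul_diagonal, Matrix.conjTranspose_apply]
  rw [Finset.sum_comm]
  refine Finset.sum_congr rfl fun k _ => ?_
  rw [Finset.sum_comm]
  exact Finset.sum_congr rfl fun l _ => Finset.sum_congr rfl fun x _ => by ring

variable [DecidableEq ι] {U : Matrix ι κ R}

lemma sum_changeBasis_mul_star (hU : U * Uᴴ = 1) (u v : (Fin m → ι) → R) :
    ∑ I, changeBasis U u I * star (changeBasis U v I) = ∑ I, u I * star (v I) := by
  classical
  induction m with
  | zero => simp [changeBasis]
  | succ m ih =>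
    have parseval_vector (a b : ι → R) :
        ∑ x, (a ᵥ* U) x * star ((b ᵥ* U) x) = ∑ k, a k * star (b k) := by
      simpa [hU, Matrix.one_apply] using sum_mul_vecMul_mul_star U (fun _ => 1) a b
    simp only [sum_tuple_succ, changeBasis_cons, ih]
    rw [Finset.sum_comm, Finset.sum_comm (s := Finset.univ (α := ι))]
    exact Finset.sum_congr rfl fun J _ => parseval_vector _ _

lemma sum_apply_zero_mul_changeBasis_mul_star [DecidableEq κ] (hU : U * Uᴴ = 1) (d : κ → R)
    (u v : (Fin (m + 1) → ι) → R) :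
    ∑ I, d (I 0) * (changeBasis U u I * star (changeBasis U v I)) =
      ∑ J : Fin m → ι, ∑ k, ∑ l,
        (U * Matrix.diagonal d * Uᴴ) l k * (u (Fin.cons l J) * star (v (Fin.cons k J))) := by
  simp only [sum_tuple_succ, Fin.cons_zero, changeBasis_cons, ← Finset.mul_sum,
    sum_changeBasis_mul_star hU, ← sum_mul_vecMul_mul_star]
  rw [Finset.sum_comm]
  simp only [Finset.mul_sum]

end ChangeOfBasis

section Diagonalisation

open scoped Matrix Nat

variable {n m : ℕ}

lemma mForm_mul_diagonal_mul_conjTranspose {p : ℕ} {U : Matrix (Fin n) (Fin p) ℂ}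
    (hU : U * Uᴴ = 1) (d : Fin p → ℂ) {u v : (Fin (m + 1) → Fin n) → ℂ} (hu : IsCoeff u)
    (hv : IsCoeff v) :
    mForm (m + 1) (U * Matrix.diagonal d * Uᴴ) u v =
      ∑ I ∈ Incr p (m + 1), (∑ t, d (I t)) * (changeBasis U u I * star (changeBasis U v I)) := by
  set w := changeBasis U u
  set z := changeBasis U v
  have hw : IsCoeff w := hu.changeBasis U
  have hz : IsCoeff z := hv.changeBasis U
  refine nsmul_right_injective (Nat.factorial_ne_zero (m + 1)) ?_
  calc (m + 1)! • mForm (m + 1) (U * Matrix.diagonal d * Uᴴ) u v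
      = (m + 1) • ∑ I, d (I 0) * (w I * star (z I)) := by
        rw [Nat.factorial_succ, mul_smul, factorial_nsmul_mForm _ hu hv,
          sum_apply_zero_mul_changeBasis_mul_star hU]
    _ = ∑ I, (∑ t, d (I t)) * (w I * star (z I)) := by
        rw [← card_nsmul_sum_apply_mul d (hw.mul_star_comp_perm hz) 0, Fintype.card_fin]
    _ = (m + 1)! • ∑ I ∈ Incr p (m + 1), (∑ t, d (I t)) * (w I * star (z I)) := by
        refine (factorial_nsmul_sum_incr (fun σ I => ?_) fun I hI => ?_).symm
        · rw [hw.mul_star_comp_perm hz]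
          exact congrArg (· * _) (Equiv.sum_comp σ fun t => d (I t))
        · rw [hw.eq_zero_of_not_injective hI, zero_mul, mul_zero]

lemma mForm_self_eq_sum_eigenvalues {H : Matrix (Fin n) (Fin n) ℂ} (hH : H.IsHermitian)
    {u : (Fin (m + 1) → Fin n) → ℂ} (hu : IsCoeff u) :
    mForm (m + 1) H u u =
      ((∑ I ∈ Incr n (m + 1), (∑ t, hH.eigenvalues (I t)) *
        ‖changeBasis (hH.eigenvectorUnitary : Matrix (Fin n) (Fin n) ℂ) u I‖ ^ 2 : ℝ) : ℂ) := by
  set U : Matrix (Fin n) (Fin n) ℂ := (hH.eigenvectorUnitary : Matrix (Fin n) (Fin n) ℂ)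
  have hU : U * Uᴴ = 1 := Unitary.mul_star_self_of_mem hH.eigenvectorUnitary.2
  have hHU : H = U * Matrix.diagonal (fun i => (hH.eigenvalues i : ℂ)) * Uᴴ := hH.spectral_theorem
  conv_lhs => rw [hHU, mForm_mul_diagonal_mul_conjTranspose hU _ hu hu]
  push_cast
  simp only [← Complex.mul_conj', starRingEnd_apply]

end Diagonalisation

end HM

/-- if all `q`-element eigenvalue sums of a Hermitian matrix `H` are
nonnegative, then the Hessian form of `H` is nonnegative on (0,j)-coefficient systems
for every `q ≤ j ≤ n`. -/
theorem hessian_form_nonneg_of_eigenvalue_sums (n q : ℕ) (hn : 1 ≤ n) (hq1 : 1 ≤ q)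
    (hqn : q ≤ n)
    (H : Matrix (Fin n) (Fin n) ℂ) (hH : H.IsHermitian)
    (heig : ∀ S : Finset (Fin n), S.card = q → 0 ≤ ∑ i ∈ S, hH.eigenvalues i) :
    ∀ j : ℕ, q ≤ j → j ≤ n → ∀ u : (Fin j → Fin n) → ℂ, HM.IsCoeff u →
      0 ≤ (HM.mForm j H u u).re := by
  intro j hqj _ u hu
  obtain ⟨m, rfl⟩ : ∃ m, j = m + 1 := Nat.exists_eq_add_of_le' (hq1.trans hqj)
  rw [HM.mForm_self_eq_sum_eigenvalues hH hu, Complex.ofReal_re]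
  refine Finset.sum_nonneg fun I hI => mul_nonneg ?_ (sq_nonneg _)
  have I_injective : Function.Injective I := (HM.mem_incr.1 hI).injective
  have h := HM.sum_nonneg_of_le_card hq1 heig (S := Finset.univ.map ⟨I, I_injective⟩) (by simpa)
  simpa only [Finset.sum_map, Function.Embedding.coeFn_mk] using h
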